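/- Let n ≥ 2 and let T ∈ M_n(ℂ). Every bounded local derivation from 𝒜_T into any Banach 𝒜_T-bimodule is a derivation if and only if T is diagonalizable. -/

import Mathlib

/-!
Both sides are equivalent to squarefreeness of the minimal polynomial of `T`. If it is squarefree,
Lagrange interpolation on its roots writes `𝒜_T` as the span of commuting idempotents, and a local
derivation obeys the Leibniz rule on any two of those. Otherwise `𝒜_T` itself contains a Jordan
chain `T u = μ u`, `T v = μ v + u` with `u ≠ 0`, and a character `χ` with `x u = χ(x) u`. Let `𝒜_T`
act on itself by left multiplication on the left and by zero on the right. Then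
`x ↦ x v - χ(x) v` is a local derivation; it kills `1`, so as a derivation it would have to vanish,
but it sends `T` to `u`.
-/

attribute [local instance] Matrix.linftyOpNormedRing Matrix.linftyOpNormedAlgebra

/-- A Banach bimodule over a (possibly non-unital) complex Banach algebra `A`:
a Banach space `M` with bounded left and right module actions
(`l a m = a · m`, `r a m = m · a`) satisfying `(a·m)·b = a·(m·b)`. -/
structure BanachBimodule (A : Type*) (M : Type*) [NonUnitalSeminormedRing A]
    [Module ℂ A] [SeminormedAddCommGroup M] [Module ℂ M] where
  l : A →ₗ[ℂ] M →ₗ[ℂ] M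
  r : A →ₗ[ℂ] M →ₗ[ℂ] M
  l_mul : ∀ a b m, l (a * b) m = l a (l b m)
  r_mul : ∀ a b m, r (a * b) m = r b (r a m)
  l_r : ∀ a b m, l a (r b m) = r b (l a m)
  l_bdd : ∃ C : ℝ, ∀ a m, ‖l a m‖ ≤ C * ‖a‖ * ‖m‖
  r_bdd : ∃ C : ℝ, ∀ a m, ‖r a m‖ ≤ C * ‖a‖ * ‖m‖

variable {A : Type*} {M : Type*} [NonUnitalSeminormedRing A] [Module ℂ A]
  [SeminormedAddCommGroup M] [Module ℂ M]

/-- `δ : A → M` is a derivation (w.r.t. the bimodule structure `B`) if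
`δ(xy) = δ(x)·y + x·δ(y)`. -/
def IsDerivation (B : BanachBimodule A M) (δ : A →ₗ[ℂ] M) : Prop :=
  ∀ x y : A, δ (x * y) = B.r y (δ x) + B.l x (δ y)

/-- `δ : A → M` is a local derivation if for every `x` there is a derivation `δₓ`
with `δ x = δₓ x`. -/
def IsLocalDerivation (B : BanachBimodule A M) (δ : A →ₗ[ℂ] M) : Prop :=
  ∀ x : A, ∃ δx : A →ₗ[ℂ] M, IsDerivation B δx ∧ δ x = δx x

/-- `T ∈ Mₙ(ℂ)` is diagonalizable if `P⁻¹ T P` is diagonal for some invertible `P`. -/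
def Diagonalizable {n : ℕ} (T : Matrix (Fin n) (Fin n) ℂ) : Prop :=
  ∃ P : Matrix (Fin n) (Fin n) ℂ, IsUnit P ∧ (P⁻¹ * T * P).IsDiag

open Polynomial

section IdempotentSpan

variable {B : BanachBimodule A M} {δ : A →ₗ[ℂ] M} {p q : A}

lemma IsDerivation.isLocalDerivation (hδ : IsDerivation B δ) : IsLocalDerivation B δ :=
  fun _ ↦ ⟨δ, hδ, rfl⟩

namespace IsLocalDerivation

lemma apply_idempotent (hδ : IsLocalDerivation B δ) (hp : IsIdempotentElem p) :
    δ p = B.r p (δ p) + B.l p (δ p) := by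
  obtain ⟨D, hD, hδD⟩ := hδ p
  simpa only [hδD, hp.eq] using hD p p

lemma l_r_apply_add (hδ : IsLocalDerivation B δ) (hp : IsIdempotentElem p)
    (hq : IsIdempotentElem q) (hpq : p * q = 0) :
    B.l p (B.r q (δ (p + q))) = B.r q (δ p) + B.l p (δ q) := by
  have hδp : B.r q (δ p) = B.l p (B.r q (δ p)) := by
    conv_lhs => rw [hδ.apply_idempotent hp]
    simp [← B.r_mul, hpq, B.l_r]
  have hδq : B.l p (δ q) = B.l p (B.r q (δ q)) := by
    conv_lhs => rw [hδ.apply_idempotent hq]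
    simp [← B.l_mul, hpq]
  rw [hδp, hδq, map_add, map_add, map_add]

lemma leibniz_of_mul_eq_zero (hδ : IsLocalDerivation B δ) (hp : IsIdempotentElem p)
    (hq : IsIdempotentElem q) (hpq : p * q = 0) : B.r q (δ p) + B.l p (δ q) = 0 := by
  obtain ⟨D, hD, hδD⟩ := hδ (p + q)
  calc B.r q (δ p) + B.l p (δ q)
      = B.l p (B.r q (D (p + q))) := by rw [← hδ.l_r_apply_add hp hq hpq, hδD]
    _ = B.r q (D p) + B.l p (D q) := hD.isLocalDerivation.l_r_apply_add hp hq hpq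
    _ = 0 := by rw [← hD, hpq, map_zero]

end IsLocalDerivation

variable [IsScalarTower ℂ A A] [SMulCommClass ℂ A A]

/-- The failure `δ(xy) - (δ(x)·y + x·δ(y))` of the Leibniz rule, bundled as a bilinear map so that
its vanishing can be tested on a spanning set. -/
noncomputable def leibnizDefect (B : BanachBimodule A M) (δ : A →ₗ[ℂ] M) : A →ₗ[ℂ] A →ₗ[ℂ] M :=
  (LinearMap.mul ℂ A).compr₂ δ - (B.r.flip ∘ₗ δ + B.l.compl₂ δ)

lemma leibnizDefect_apply (x y : A) :
    leibnizDefect B δ x y = δ (x * y) - (B.r y (δ x) + B.l x (δ y)) := rfl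

lemma isDerivation_iff_leibnizDefect_eq_zero : IsDerivation B δ ↔ leibnizDefect B δ = 0 := by
  simp [IsDerivation, LinearMap.ext_iff₂, leibnizDefect_apply, sub_eq_zero]

namespace IsLocalDerivation

lemma leibnizDefect_self (hδ : IsLocalDerivation B δ) (hp : IsIdempotentElem p) :
    leibnizDefect B δ p p = 0 := by
  rw [leibnizDefect_apply, hp.eq, ← hδ.apply_idempotent hp, sub_self]

lemma leibnizDefect_of_mul_eq_zero (hδ : IsLocalDerivation B δ) (hp : IsIdempotentElem p)
    (hq : IsIdempotentElem q) (hpq : p * q = 0) : leibnizDefect B δ p q = 0 := by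
  rw [leibnizDefect_apply, hpq, hδ.leibniz_of_mul_eq_zero hp hq hpq, map_zero, sub_zero]

-- Split `p = e + (p - e)` and `q = e + (q - e)` with `e = p * q`; the three idempotents
-- `e`, `p - e`, `q - e` are mutually orthogonal.
lemma leibnizDefect_of_commute (hδ : IsLocalDerivation B δ) (hp : IsIdempotentElem p)
    (hq : IsIdempotentElem q) (hpq : Commute p q) : leibnizDefect B δ p q = 0 := by
  obtain ⟨e, he⟩ : ∃ e, p * q = e := ⟨_, rfl⟩
  have hpe : p * e = e := by rw [← he, ← mul_assoc, hp.eq]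
  have heq : e * q = e := by rw [← he, mul_assoc, hq.eq]
  have hep : e * p = e := by rw [← he, hpq.eq, mul_assoc, hp.eq, ← hpq.eq]
  have hqe : q * e = e := by rw [← he, hpq.eq, ← mul_assoc, hq.eq]
  have he' : IsIdempotentElem e := he ▸ hp.mul_of_commute hpq hq
  have hp' : IsIdempotentElem (p - e) := he'.sub hp hep hpe
  have hq' : IsIdempotentElem (q - e) := he'.sub hq heq hqe
  calc leibnizDefect B δ p q
      = leibnizDefect B δ (e + (p - e)) (e + (q - e)) := by
        rw [add_sub_cancel, add_sub_cancel]
    _ = leibnizDefect B δ e e + leibnizDefect B δ e (q - e)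
        + (leibnizDefect B δ (p - e) e + leibnizDefect B δ (p - e) (q - e)) := by
        simp only [map_add, LinearMap.add_apply]
        abel
    _ = 0 := by
        rw [hδ.leibnizDefect_self he',
          hδ.leibnizDefect_of_mul_eq_zero he' hq' (by rw [mul_sub, heq, he'.eq, sub_self]),
          hδ.leibnizDefect_of_mul_eq_zero hp' he' (by rw [sub_mul, hpe, he'.eq, sub_self]),
          hδ.leibnizDefect_of_mul_eq_zero hp' hq'
            (by rw [sub_mul, mul_sub, mul_sub, he, hpe, heq, he'.eq, sub_self])]
        simp

theorem isDerivation_of_span_idempotents [IsMulCommutative A]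
    (hA : Submodule.span ℂ {e : A | IsIdempotentElem e} = ⊤) (hδ : IsLocalDerivation B δ) :
    IsDerivation B δ := by
  rw [isDerivation_iff_leibnizDefect_eq_zero]
  refine LinearMap.ext_on hA fun p hp ↦ LinearMap.ext_on hA fun q hq ↦ ?_
  exact hδ.leibnizDefect_of_commute hp hq (mul_comm' p q)

end IsLocalDerivation

end IdempotentSpan

section SpectralIdempotents

variable {K R : Type*} [Field K] [Ring R] [Algebra K R] {a : R}

lemma aeval_eq_of_eval_roots_eq (hsplit : (minpoly K a).Splits) (hsep : (minpoly K a).Separable)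
    {f g : K[X]} (hfg : ∀ c ∈ (minpoly K a).roots, f.eval c = g.eval c) :
    aeval a f = aeval a g := by
  rw [← sub_eq_zero, ← map_sub, ← minpoly.dvd_iff]
  by_cases h : f - g = 0
  · exact h ▸ dvd_zero _
  refine hsplit.dvd_of_roots_le_roots hsep.ne_zero ?_
  refine (Multiset.le_iff_subset (nodup_roots hsep)).mpr fun c hc ↦ ?_
  rw [mem_roots h, IsRoot, eval_sub, hfg c hc, sub_self]

theorem span_idempotents_eq_top (hsplit : (minpoly K a).Splits)
    (hsep : (minpoly K a).Separable) (hgen : Function.Surjective (aeval a : K[X] →ₐ[K] R)) :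
    Submodule.span K {e : R | IsIdempotentElem e} = ⊤ := by
  classical
  set s := (minpoly K a).roots.toFinset
  have hinj : Set.InjOn (id : K → K) s := Function.injective_id.injOn
  have hidem : ∀ c ∈ s, IsIdempotentElem (aeval a (Lagrange.basis s id c)) := by
    intro c hc
    rw [IsIdempotentElem, ← map_mul]
    refine aeval_eq_of_eval_roots_eq hsplit hsep fun d hd ↦ ?_
    replace hd : d ∈ s := Multiset.mem_toFinset.mpr hd
    obtain rfl | hcd := eq_or_ne c d
    · have hcc : (Lagrange.basis s id c).eval c = 1 := Lagrange.eval_basis_self hinj hc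
      rw [eval_mul, hcc, one_mul]
    · have hcd' : (Lagrange.basis s id c).eval d = 0 :=
        Lagrange.eval_basis_of_ne (v := id) hcd hd
      rw [eval_mul, hcd', zero_mul]
  refine eq_top_iff.mpr fun x _ ↦ ?_
  obtain ⟨f, rfl⟩ := hgen x
  have hf : aeval a f = ∑ c ∈ s, f.eval c • aeval a (Lagrange.basis s id c) := by
    rw [aeval_eq_of_eval_roots_eq hsplit hsep
      (g := Lagrange.interpolate s id fun c ↦ f.eval c)]
    · simp [Lagrange.interpolate_apply, Algebra.smul_def]
    · exact fun c hc ↦ (Lagrange.eval_interpolate_at_node (fun c ↦ f.eval c) hinj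
        (Multiset.mem_toFinset.mpr hc)).symm
  rw [hf]
  exact Submodule.sum_smul_mem _ _ fun c hc ↦ Submodule.subset_span (hidem c hc)

end SpectralIdempotents

section LeftRegular

variable {R : Type*} [NonUnitalSeminormedRing R] [Module ℂ R] [IsScalarTower ℂ R R]
  [SMulCommClass ℂ R R]

/-- The Banach bimodule `R` over itself with left multiplication as left action and zero right
action. Its derivations are the maps `δ` with `δ(xy) = x·δ(y)`. -/
noncomputable def leftRegular (R : Type*) [NonUnitalSeminormedRing R] [Module ℂ R]
    [IsScalarTower ℂ R R] [SMulCommClass ℂ R R] : BanachBimodule R R where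
  l := LinearMap.mul ℂ R
  r := 0
  l_mul := mul_assoc
  r_mul := by simp
  l_r := by simp
  l_bdd := ⟨1, by simpa using norm_mul_le⟩
  r_bdd := ⟨0, by simp⟩

lemma isDerivation_leftRegular_iff {δ : R →ₗ[ℂ] R} :
    IsDerivation (leftRegular R) δ ↔ ∀ x y, δ (x * y) = x * δ y := by
  simp [IsDerivation, leftRegular]

lemma isDerivation_leftRegular_mulRight (m : R) :
    IsDerivation (leftRegular R) (LinearMap.mulRight ℂ m) :=
  isDerivation_leftRegular_iff.mpr fun x y ↦ mul_assoc x y m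

-- Every value `x * v - χ x • v` lies in `ℂ • u`. It is a multiple of `x * u` unless `χ x = 0`, in
-- which case it equals `x * v`.
lemma isLocalDerivation_leftRegular_mulRight_sub_smulRight {χ : Module.Dual ℂ R} {u v : R}
    (hu : ∀ x, x * u = χ x • u) (hv : ∀ x, ∃ β : ℂ, x * v = χ x • v + β • u) :
    IsLocalDerivation (leftRegular R) (LinearMap.mulRight ℂ v - χ.smulRight v) := by
  intro x
  obtain ⟨β, hβ⟩ := hv x
  by_cases hx : χ x = 0
  · exact ⟨_, isDerivation_leftRegular_mulRight v, by simp [hx]⟩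
  · refine ⟨_, isDerivation_leftRegular_mulRight ((β / χ x) • u), ?_⟩
    simp [hβ, mul_smul_comm, hu, smul_smul, div_mul_cancel₀ _ hx]

end LeftRegular

section JordanChain

section

variable {K R : Type*} [CommRing K] [Ring R] [Algebra K R] {t u v : R} {μ : K}

lemma aeval_mul_eq_eval_smul (hu : t * u = μ • u) (f : K[X]) :
    aeval t f * u = f.eval μ • u := by
  obtain ⟨g, hg⟩ := X_sub_C_dvd_sub_C_eval (a := μ) (p := f)
  rw [sub_eq_iff_eq_add, mul_comm] at hg
  rw [hg]
  simp [add_mul, mul_assoc, sub_mul, hu, Algebra.smul_def]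

lemma exists_aeval_mul_eq_eval_smul_add_smul (hu : t * u = μ • u) (hv : t * v = μ • v + u)
    (f : K[X]) : ∃ β : K, aeval t f * v = f.eval μ • v + β • u := by
  obtain ⟨g, hg⟩ := X_sub_C_dvd_sub_C_eval (a := μ) (p := f)
  rw [sub_eq_iff_eq_add, mul_comm] at hg
  refine ⟨g.eval μ, ?_⟩
  rw [← aeval_mul_eq_eval_smul hu g]
  nth_rw 1 [hg]
  simp [add_mul, mul_assoc, sub_mul, hv, Algebra.smul_def, add_comm]

end

lemma exists_X_sub_C_mul_self_dvd_of_not_squarefree {K : Type*} [Field K] {f : K[X]}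
    (hsplit : f.Splits) (hf : f ≠ 0) (hsq : ¬ Squarefree f) :
    ∃ μ, (X - C μ) * (X - C μ) ∣ f := by
  obtain ⟨p, hpf, hp⟩ : ∃ p, p * p ∣ f ∧ ¬ IsUnit p := by simpa [Squarefree] using hsq
  obtain ⟨μ, hμ⟩ := (hsplit.of_dvd hf (dvd_of_mul_left_dvd hpf)).exists_eval_eq_zero
    (mt isUnit_iff_degree_eq_zero.mpr hp)
  exact ⟨μ, (mul_dvd_mul (dvd_iff_isRoot.mpr hμ) (dvd_iff_isRoot.mpr hμ)).trans hpf⟩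

lemma exists_jordanChain_of_not_squarefree_minpoly {K R : Type*} [Field K] [Ring R] [Algebra K R]
    {t : R} (ht : IsIntegral K t) (hsplit : (minpoly K t).Splits)
    (hsq : ¬ Squarefree (minpoly K t)) :
    ∃ (μ : K) (u v : R), u ≠ 0 ∧ t * u = μ • u ∧ t * v = μ • v + u := by
  obtain ⟨μ, q, hq⟩ :=
    exists_X_sub_C_mul_self_dvd_of_not_squarefree hsplit (minpoly.ne_zero ht) hsq
  refine ⟨μ, aeval t ((X - C μ) * q), aeval t q, fun hu ↦ ?_, ?_, ?_⟩
  · have hne : (X - C μ) * q ≠ 0 := fun h ↦ minpoly.ne_zero ht (by rw [hq, mul_assoc, h, mul_zero])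
    have hdvd : (X - C μ) * ((X - C μ) * q) ∣ 1 * ((X - C μ) * q) := by
      rw [one_mul, ← mul_assoc, ← hq]
      exact minpoly.dvd K t hu
    exact not_isUnit_X_sub_C μ (isUnit_of_dvd_one ((mul_dvd_mul_iff_right hne).mp hdvd))
  · have haeval : aeval t (X - C μ) * aeval t ((X - C μ) * q) = 0 := by
      rw [← map_mul, ← mul_assoc, ← hq, minpoly.aeval]
    simpa [sub_mul, sub_eq_zero, Algebra.smul_def] using haeval
  · simp [sub_mul, Algebra.smul_def]

theorem squarefree_minpoly_of_isDerivation_leftRegular {R : Type*} [NormedRing R]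
    [NormedAlgebra ℂ R] [FiniteDimensional ℂ R] {t : R}
    (hgen : Function.Surjective (aeval t : ℂ[X] →ₐ[ℂ] R))
    (H : ∀ δ : R →ₗ[ℂ] R, Continuous δ → IsLocalDerivation (leftRegular R) δ →
      IsDerivation (leftRegular R) δ) : Squarefree (minpoly ℂ t) := by
  by_contra hsq
  obtain ⟨μ, u, v, hu0, hu, hv⟩ :=
    exists_jordanChain_of_not_squarefree_minpoly (Algebra.IsIntegral.isIntegral t)
      (IsAlgClosed.splits _) hsq
  obtain ⟨φ, hφ⟩ := Module.Projective.exists_dual_eq_one ℂ hu0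
  set χ : Module.Dual ℂ R := φ ∘ₗ LinearMap.mulRight ℂ u
  have hχ : ∀ f : ℂ[X], χ (aeval t f) = f.eval μ := by
    simp [χ, aeval_mul_eq_eval_smul hu, hφ]
  set δ : R →ₗ[ℂ] R := LinearMap.mulRight ℂ v - χ.smulRight v
  have hχu : ∀ x, x * u = χ x • u :=
    hgen.forall.mpr fun f ↦ hχ f ▸ aeval_mul_eq_eval_smul hu f
  have hχv : ∀ x, ∃ β : ℂ, x * v = χ x • v + β • u :=
    hgen.forall.mpr fun f ↦ hχ f ▸ exists_aeval_mul_eq_eval_smul_add_smul hu hv f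
  have hlocal : IsLocalDerivation (leftRegular R) δ :=
    isLocalDerivation_leftRegular_mulRight_sub_smulRight hχu hχv
  have hδ := H δ δ.continuous_of_finiteDimensional hlocal
  have hχ1 : χ 1 = 1 := by simpa using hχ 1
  have hχt : χ t = μ := by simpa using hχ X
  have hδ1 : δ 1 = 0 := by simp [δ, hχ1]
  have hδt : δ t = u := by simp [δ, hv, hχt]
  refine hu0 ?_
  calc u = δ (t * 1) := by rw [mul_one, hδt]
    _ = 0 := by rw [isDerivation_leftRegular_iff.mp hδ, hδ1, mul_zero]

end JordanChain

section Diagonalizability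

lemma minpoly_units_conj {K R : Type*} [CommRing K] [Ring R] [Algebra K R] (u : Rˣ) (a : R) :
    minpoly K (↑u⁻¹ * a * ↑u) = minpoly K a := by
  simpa [ConjAct.units_smul_def] using
    minpoly.algEquiv_eq (MulSemiringAction.toAlgEquiv K R (ConjAct.toConjAct u⁻¹)) a

variable {K : Type*} [Field K]

lemma squarefree_minpoly_diagonal {ι : Type*} [Fintype ι] [DecidableEq ι] (d : ι → K) :
    Squarefree (minpoly K (Matrix.diagonal d)) := by
  classical
  have hd : minpoly K (Matrix.diagonal d) = minpoly K d :=
    minpoly.algHom_eq (Matrix.diagonalAlgHom K) Matrix.diagonal_injective d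
  have hsep : (∏ c ∈ Finset.univ.image d, (X - C c)).Separable :=
    separable_prod_X_sub_C_iff'.mpr fun _ _ _ _ h ↦ h
  rw [hd]
  refine hsep.squarefree.squarefree_of_dvd (minpoly.dvd K d (funext fun i ↦ ?_))
  rw [aeval_pi_apply₂, coe_aeval_eq_eval, eval_prod]
  exact Finset.prod_eq_zero (Finset.mem_image_of_mem d (Finset.mem_univ i)) (by simp)

lemma exists_basis_eigenvectors {V ι : Type*} [AddCommGroup V] [Module K V]
    (b₀ : Module.Basis ι K V) {f : Module.End K V} (hf : ⨆ μ, f.eigenspace μ = ⊤) :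
    ∃ (b : Module.Basis ι K V) (d : ι → K), ∀ i, f (b i) = d i • b i := by
  have hspan : ⊤ ≤ Submodule.span K {v | ∃ μ : K, f v = μ • v} := by
    rw [← hf]
    exact iSup_le fun μ v hv ↦ Submodule.subset_span ⟨μ, Module.End.mem_eigenspace_iff.mp hv⟩
  set b := Module.Basis.ofSpan hspan
  have hb : ∀ i, ∃ μ : K, f (b i) = μ • b i := fun i ↦ Module.Basis.ofSpan_subset hspan ⟨i, rfl⟩
  choose d hd using hb
  set e := b.indexEquiv b₀
  exact ⟨b.reindex e, d ∘ e.symm, fun i ↦ by simp [hd]⟩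

variable {n : ℕ} {T : Matrix (Fin n) (Fin n) ℂ}

lemma Diagonalizable.squarefree_minpoly (hT : Diagonalizable T) : Squarefree (minpoly ℂ T) := by
  obtain ⟨_, ⟨P, rfl⟩, hdiag⟩ := hT
  rw [← Matrix.coe_units_inv] at hdiag
  rw [← minpoly_units_conj P T, ← hdiag.diagonal_diag]
  exact squarefree_minpoly_diagonal _

lemma diagonalizable_of_basis_eigenvectors (b : Module.Basis (Fin n) ℂ (Fin n → ℂ)) {d : Fin n → ℂ}
    (hb : ∀ i, T.toLin' (b i) = d i • b i) : Diagonalizable T := by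
  let b₀ := Pi.basisFun ℂ (Fin n)
  have hinv : (b₀.toMatrix b)⁻¹ = b.toMatrix b₀ :=
    Matrix.inv_eq_left_inv (b.toMatrix_mul_toMatrix_flip b₀)
  have hconj : (b₀.toMatrix b)⁻¹ * T * b₀.toMatrix b = LinearMap.toMatrix b b T.toLin' := by
    rw [hinv, ← basis_toMatrix_mul_linearMap_toMatrix_mul_basis_toMatrix b b₀ b b₀,
      LinearMap.toMatrix_eq_toMatrix', LinearMap.toMatrix'_toLin']
  refine ⟨b₀.toMatrix b, .of_mul_eq_one _ (b₀.toMatrix_mul_toMatrix_flip b), ?_⟩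
  rw [hconj]
  intro i j hij
  simp [LinearMap.toMatrix_apply, hb, hij.symm]

lemma diagonalizable_of_squarefree_minpoly (hT : Squarefree (minpoly ℂ T)) : Diagonalizable T := by
  have hss : Module.End.IsSemisimple T.toLin' :=
    Module.End.isSemisimple_of_squarefree_aeval_eq_zero (Matrix.minpoly_toLin' T ▸ hT)
      (minpoly.aeval ℂ _)
  obtain ⟨b, d, hb⟩ := exists_basis_eigenvectors (Pi.basisFun ℂ (Fin n)) hss.iSup_eigenspace_eq_top
  exact diagonalizable_of_basis_eigenvectors b hb

theorem diagonalizable_iff_squarefree_minpoly : Diagonalizable T ↔ Squarefree (minpoly ℂ T) :=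
  ⟨Diagonalizable.squarefree_minpoly, diagonalizable_of_squarefree_minpoly⟩

end Diagonalizability

lemma surjective_aeval_adjoin_singleton {K R : Type*} [CommSemiring K] [Semiring R] [Algebra K R]
    (a : R) : Function.Surjective
      (aeval ⟨a, Algebra.self_mem_adjoin_singleton K a⟩ : K[X] →ₐ[K] Algebra.adjoin K {a}) := by
  rintro ⟨x, hx⟩
  obtain ⟨f, rfl⟩ := Algebra.adjoin_mem_exists_aeval K a hx
  exact ⟨f, Subtype.ext (aeval_subalgebra_coe f _ _)⟩

theorem local_derivations_are_derivations_iff_diagonalizable_general.{u} {E : Type u} [NormedRing E]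
    [NormedAlgebra ℂ E] {a : E} (ha : IsIntegral ℂ a) :
    (∀ (M : Type u) (_ : NormedAddCommGroup M) (_ : NormedSpace ℂ M) (_ : CompleteSpace M)
        (B : BanachBimodule ↥(Algebra.adjoin ℂ {a}) M) (δ : ↥(Algebra.adjoin ℂ {a}) →ₗ[ℂ] M),
        Continuous δ → IsLocalDerivation B δ → IsDerivation B δ) ↔
      Squarefree (minpoly ℂ a) := by
  set t : Algebra.adjoin ℂ {a} := ⟨a, Algebra.self_mem_adjoin_singleton ℂ a⟩
  have hgen : Function.Surjective (aeval t : ℂ[X] →ₐ[ℂ] Algebra.adjoin ℂ {a}) :=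
    surjective_aeval_adjoin_singleton a
  have hmin : minpoly ℂ t = minpoly ℂ a :=
    (minpoly.algHom_eq (Algebra.adjoin ℂ {a}).val Subtype.val_injective t).symm
  have : FiniteDimensional ℂ (Algebra.adjoin ℂ {a}) := Algebra.finite_adjoin_simple_of_isIntegral ha
  rw [← hmin]
  constructor
  · intro H
    have : CompleteSpace (Algebra.adjoin ℂ {a}) := FiniteDimensional.complete ℂ _
    exact squarefree_minpoly_of_isDerivation_leftRegular hgen (H _ _ _ this _)
  · intro hsq M _ _ _ B δ _ hδ
    exact hδ.isDerivation_of_span_idempotents <|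
      span_idempotents_eq_top (IsAlgClosed.splits _)
        (PerfectField.separable_iff_squarefree.mpr hsq) hgen

/-- For `n ≥ 2` and `T ∈ Mₙ(ℂ)`: every bounded local derivation from `𝒜_T` into any
Banach `𝒜_T`-bimodule is a derivation, if and only if `T` is diagonalizable. -/
theorem local_derivations_are_derivations_iff_diagonalizable (n : ℕ) (hn : 2 ≤ n)
    (T : Matrix (Fin n) (Fin n) ℂ) :
    (∀ (M : Type) (_ : NormedAddCommGroup M) (_ : NormedSpace ℂ M) (_ : CompleteSpace M)
        (B : BanachBimodule ↥(Algebra.adjoin ℂ ({T} : Set (Matrix (Fin n) (Fin n) ℂ))) M)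
        (δ : ↥(Algebra.adjoin ℂ ({T} : Set (Matrix (Fin n) (Fin n) ℂ))) →ₗ[ℂ] M),
        Continuous δ → IsLocalDerivation B δ → IsDerivation B δ) ↔
      Diagonalizable T :=
  (local_derivations_are_derivations_iff_diagonalizable_general (Matrix.isIntegral T)).trans
    diagonalizable_iff_squarefree_minpoly.symm
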